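/- arXiv:2207.08874 — 2 statements merged into one kernel-verified Lean document; each statement's English description precedes it below -/
import Mathlib

section
/- Assume the abc-conjecture. Then there exists a constant C > 0 such that for all real x > C and all real y with 1 ≤ y ≤ x^{0.2}, there do not exist three distinct squarefull integers n₁ < n₂ < n₃ all lying in the interval (x, x + y] with n₁ + n₃ = 2·n₂ (i.e., the squarefull numbers in (x, x + y] contain no non-trivial three-term arithmetic progression). -/
/-- A positive integer `n` is squarefull if every prime dividing `n` does so to at
least the second power. -/
def IsSquarefull (n : ℕ) : Prop := ∀ p : ℕ, p.Prime → p ∣ n → p ^ 2 ∣ n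

/-- The radical (kernel) of a natural number: the product of its prime divisors. -/
def natRadical (n : ℕ) : ℕ := ∏ p ∈ n.primeFactors, p

/-- The abc-conjecture: for every `ε > 0` there is `C_ε > 0` such that for all
coprime positive integers `a`, `b`, `c` with `a + b = c`, one has
`c ≤ C_ε · rad(a·b·c)^(1+ε)`. -/
def ABCConjecture : Prop :=
  ∀ ε : ℝ, 0 < ε → ∃ Cε : ℝ, 0 < Cε ∧ ∀ a b c : ℕ,
    0 < a → 0 < b → 0 < c → Nat.Coprime a b → a + b = c →
    (c : ℝ) ≤ Cε * (natRadical (a * b * c) : ℝ) ^ (1 + ε)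

/-!
Write a progression of positive squarefull numbers as `u * g`, `(u + e) * g`, `(u + 2 * e) * g` with
`u` and `e` coprime, put `n = (u + e) * g`, `d = e * g`, and apply the abc-conjecture to
`u * (u + 2 * e) + e ^ 2 = (u + e) ^ 2`. The radical of a divisor of a squarefull number is at most
the square root of that number, so the radical `R` of the product satisfies
`g * R ≤ n ^ (3 / 2) * d`, and abc gives `n ^ 2 ≪ d * (n ^ (3 / 2) * d) ^ (1 + ε)`. Hence
`d ≫ n ^ (1 / 4 - ε')`, so any exponent below `1 / 4` may replace `1 / 5`.
-/

open UniqueFactorizationMonoid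

lemma natRadical_eq_radical (n : ℕ) : natRadical n = radical n :=
  Nat.radical_eq_prod_primeFactors.symm

lemma IsSquarefull.radical_sq_dvd {n : ℕ} (h : IsSquarefull n) : radical n ^ 2 ∣ n := by
  rw [Nat.radical_eq_prod_primeFactors, ← Finset.prod_pow]
  refine Finset.prod_dvd_of_isRelPrime (fun p hp q hq hpq => ?_) fun p hp =>
    h p (Nat.prime_of_mem_primeFactors hp) (Nat.dvd_of_mem_primeFactors hp)
  have hcop : p.Coprime q := (Nat.coprime_primes (Nat.prime_of_mem_primeFactors hp)
    (Nat.prime_of_mem_primeFactors hq)).mpr hpq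
  exact Nat.coprime_iff_isRelPrime.mp (hcop.pow 2 2)

lemma IsSquarefull.radical_sq_le_of_dvd {n v : ℕ} (h : IsSquarefull n) (hn : n ≠ 0) (hv : v ∣ n) :
    radical v ^ 2 ≤ n :=
  Nat.le_of_dvd hn.bot_lt <|
    (pow_dvd_pow_of_dvd (radical_dvd_radical hv hn) 2).trans h.radical_sq_dvd

lemma radical_mul_mul_sq_mul_sq_le (a b c d : ℕ) :
    radical (a * b * c ^ 2 * d ^ 2) ≤ radical a * radical b * radical c * radical d := by
  have hpos : 0 < radical a * radical b * radical c * radical d :=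
    Nat.pos_of_ne_zero (by simp)
  refine Nat.le_of_dvd hpos ?_
  calc radical (a * b * c ^ 2 * d ^ 2)
      ∣ radical a * radical b * radical (c ^ 2) * radical (d ^ 2) :=
        radical_mul_dvd.trans <| mul_dvd_mul_right
          (radical_mul_dvd.trans <| mul_dvd_mul_right radical_mul_dvd _) _
    _ = radical a * radical b * radical c * radical d := by
        rw [radical_pow c two_ne_zero, radical_pow d two_ne_zero]

lemma mul_radical_sq_le_of_isSquarefull {g u e : ℕ} (hg : 0 < g) (hu : 0 < u) (he : 0 < e)
    (h₁ : IsSquarefull (u * g)) (h₂ : IsSquarefull ((u + e) * g))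
    (h₃ : IsSquarefull ((u + 2 * e) * g)) :
    (g * radical (u * (u + 2 * e) * e ^ 2 * (u + e) ^ 2)) ^ 2 ≤
      ((u + e) * g) ^ 3 * (e * g) ^ 2 := by
  have hr₁ := h₁.radical_sq_le_of_dvd (by positivity) (Nat.dvd_mul_right u g)
  have hr₂ := h₂.radical_sq_le_of_dvd (by positivity) (Nat.dvd_mul_right (u + e) g)
  have hr₃ := h₃.radical_sq_le_of_dvd (by positivity) (Nat.dvd_mul_right (u + 2 * e) g)
  have hre : radical e ≤ e := Nat.radical_le_self_iff.mpr he.ne'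
  have hmid : u * (u + 2 * e) ≤ (u + e) ^ 2 := Nat.le.intro (by ring : _ + e ^ 2 = _)
  calc (g * radical (u * (u + 2 * e) * e ^ 2 * (u + e) ^ 2)) ^ 2
      ≤ (g * (radical u * radical (u + 2 * e) * radical e * radical (u + e))) ^ 2 := by
        gcongr
        exact radical_mul_mul_sq_mul_sq_le _ _ _ _
    _ = g ^ 2 *
          (radical u ^ 2 * radical (u + 2 * e) ^ 2 * radical e ^ 2 * radical (u + e) ^ 2) := by
        ring
    _ ≤ g ^ 2 * (u * g * ((u + 2 * e) * g) * e ^ 2 * ((u + e) * g)) := by gcongr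
    _ = g ^ 5 * (u * (u + 2 * e)) * e ^ 2 * (u + e) := by ring
    _ ≤ g ^ 5 * (u + e) ^ 2 * e ^ 2 * (u + e) := by gcongr
    _ = ((u + e) * g) ^ 3 * (e * g) ^ 2 := by ring

lemma ABCConjecture.exists_sq_le_mul_radical_rpow (habc : ABCConjecture) {ε : ℝ} (hε : 0 < ε) :
    ∃ K : ℝ, 0 < K ∧ ∀ u e : ℕ, 0 < u → 0 < e → u.Coprime e →
      ((u + e : ℕ) : ℝ) ^ 2 ≤
        K * (radical (u * (u + 2 * e) * e ^ 2 * (u + e) ^ 2) : ℕ) ^ (1 + ε) := by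
  obtain ⟨K, hK, h⟩ := habc ε hε
  refine ⟨K, hK, fun u e hu he hue => ?_⟩
  have hcop : (u * (u + 2 * e)).Coprime (e ^ 2) :=
    (hue.mul_left (by rwa [Nat.coprime_add_mul_right_left])).pow_right 2
  have hle := h (u * (u + 2 * e)) (e ^ 2) ((u + e) ^ 2) (by positivity) (by positivity)
    (by positivity) hcop (by ring)
  rwa [natRadical_eq_radical, Nat.cast_pow] at hle

lemma ABCConjecture.exists_middle_sq_le (habc : ABCConjecture) {ε : ℝ} (hε : 0 < ε) :
    ∃ K : ℝ, 0 < K ∧ ∀ a d : ℕ, 0 < a → 0 < d →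
      IsSquarefull a → IsSquarefull (a + d) → IsSquarefull (a + 2 * d) →
      ((a + d : ℕ) : ℝ) ^ 2 ≤ K * d * (((a + d : ℕ) : ℝ) ^ (3 / 2 : ℝ) * d) ^ (1 + ε) := by
  obtain ⟨K, hK, hsq⟩ := habc.exists_sq_le_mul_radical_rpow hε
  refine ⟨K, hK, fun a d ha hd h₁ h₂ h₃ => ?_⟩
  obtain ⟨g, u, e, hg, hue, rfl, rfl⟩ := Nat.exists_coprime' (Nat.gcd_pos_of_pos_left d ha)
  have hu : 0 < u := Nat.pos_of_mul_pos_right ha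
  have he : 0 < e := Nat.pos_of_mul_pos_right hd
  rw [← mul_assoc, ← add_mul] at h₃
  rw [← add_mul] at h₂ ⊢
  have hR := mul_radical_sq_le_of_isSquarefull hg hu he h₁ h₂ h₃
  have hmid := hsq u e hu he hue
  set R := radical (u * (u + 2 * e) * e ^ 2 * (u + e) ^ 2)
  set n := (u + e) * g with hn
  set d := e * g
  have hgR : (g * R : ℝ) ≤ (n : ℝ) ^ (3 / 2 : ℝ) * d := by
    refine (sq_le_sq₀ (by positivity) (by positivity)).mp ?_
    calc (g * R : ℝ) ^ 2 ≤ (n : ℝ) ^ 3 * d ^ 2 := mod_cast hR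
      _ = ((n : ℝ) ^ (3 / 2 : ℝ) * d) ^ 2 := by
        rw [mul_pow, ← Real.rpow_mul_natCast n.cast_nonneg]
        norm_num
  have hg_rpow : (g : ℝ) ≤ (g : ℝ) ^ (1 + ε) :=
    Real.self_le_rpow_of_one_le (mod_cast hg) (by linarith)
  have hgd : (g : ℝ) ≤ d := mod_cast Nat.le_mul_of_pos_left g he
  calc (n : ℝ) ^ 2 = g ^ 2 * ((u + e : ℕ) : ℝ) ^ 2 := by rw [hn, Nat.cast_mul]; ring
    _ ≤ g ^ 2 * (K * (R : ℝ) ^ (1 + ε)) := by gcongr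
    _ = K * g * (g * (R : ℝ) ^ (1 + ε)) := by ring
    _ ≤ K * g * ((g : ℝ) ^ (1 + ε) * (R : ℝ) ^ (1 + ε)) := by gcongr
    _ = K * g * (g * R) ^ (1 + ε) := by rw [Real.mul_rpow g.cast_nonneg R.cast_nonneg]
    _ ≤ K * d * ((n : ℝ) ^ (3 / 2 : ℝ) * d) ^ (1 + ε) := by gcongr

/-- With `ε = 1 / 4 - θ` the exponent `2 - θ - (3 / 2 + θ) * (1 + ε)` left after substituting
`d ≤ n ^ θ` factors as `(1 / 4 - θ) * (1 / 2 - θ)`. -/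
lemma rpow_le_of_sq_le_mul_rpow {θ n d K : ℝ} (hθ : θ < 1 / 4) (hn : 0 < n) (hd : 0 ≤ d)
    (hK : 0 ≤ K) (hdn : d ≤ n ^ θ)
    (h : n ^ 2 ≤ K * d * (n ^ (3 / 2 : ℝ) * d) ^ (1 + (1 / 4 - θ))) :
    n ^ ((1 / 4 - θ) * (1 / 2 - θ)) ≤ K := by
  have hmul : n ^ ((1 / 4 - θ) * (1 / 2 - θ)) * n ^ (θ + (3 / 2 + θ) * (1 + (1 / 4 - θ))) ≤
      K * n ^ (θ + (3 / 2 + θ) * (1 + (1 / 4 - θ))) := by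
    calc _ = n ^ 2 := by
          rw [← Real.rpow_add hn, ← Real.rpow_natCast]
          congr 1
          push_cast
          ring
      _ ≤ K * d * (n ^ (3 / 2 : ℝ) * d) ^ (1 + (1 / 4 - θ)) := h
      _ ≤ K * n ^ θ * (n ^ (3 / 2 : ℝ) * n ^ θ) ^ (1 + (1 / 4 - θ)) := by gcongr
      _ = K * n ^ (θ + (3 / 2 + θ) * (1 + (1 / 4 - θ))) := by
          rw [← Real.rpow_add hn, ← Real.rpow_mul hn.le, mul_assoc, ← Real.rpow_add hn]
  exact le_of_mul_le_mul_right hmul (by positivity)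

lemma ABCConjecture.exists_rpow_lt_diff (habc : ABCConjecture) {θ : ℝ} (hθ : θ < 1 / 4) :
    ∃ C : ℝ, 0 < C ∧ ∀ a d : ℕ, 0 < a → 0 < d →
      IsSquarefull a → IsSquarefull (a + d) → IsSquarefull (a + 2 * d) →
      C < (a + d : ℕ) → ((a + d : ℕ) : ℝ) ^ θ < d := by
  obtain ⟨K, hK, hsq⟩ := habc.exists_middle_sq_le (sub_pos.mpr hθ)
  have hδ : 0 < (1 / 4 - θ) * (1 / 2 - θ) := mul_pos (by linarith) (by linarith)
  refine ⟨K ^ ((1 / 4 - θ) * (1 / 2 - θ))⁻¹, by positivity, fun a d ha hd h₁ h₂ h₃ hC => ?_⟩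
  by_contra! hdn
  have hle := rpow_le_of_sq_le_mul_rpow hθ (by positivity) d.cast_nonneg hK.le hdn
    (hsq a d ha hd h₁ h₂ h₃)
  exact hC.not_ge ((Real.le_rpow_inv_iff_of_pos (by positivity) hK.le hδ).mpr hle)

theorem no_three_term_AP_squarefull_of_abc_general (habc : ABCConjecture) {θ : ℝ} (hθ₀ : 0 ≤ θ)
    (hθ : θ < 1 / 4) :
    ∃ C : ℝ, 0 < C ∧ ∀ x y : ℝ, C < x → y ≤ x ^ θ →
      ThreeAPFree {n : ℕ | IsSquarefull n ∧ (n : ℝ) ∈ Set.Ioc x (x + y)} := by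
  obtain ⟨C, hC, hdiff⟩ := habc.exists_rpow_lt_diff hθ
  refine ⟨C, hC, fun x y hCx hy => threeAPFree_iff_eq_right.mpr fun n₁ h₁ n₂ h₂ n₃ h₃ hAP => ?_⟩
  by_contra hne
  wlog hlt : n₁ < n₃ generalizing n₁ n₃
  · exact this n₃ h₃ n₁ h₁ (by omega) (Ne.symm hne) (by omega)
  obtain ⟨d, rfl⟩ := Nat.exists_eq_add_of_le (show n₁ ≤ n₂ by omega)
  obtain rfl : n₃ = n₁ + 2 * d := by omega
  obtain ⟨hs₁, hx₁, -⟩ := h₁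
  obtain ⟨hs₂, hx₂, -⟩ := h₂
  obtain ⟨hs₃, -, hy₃⟩ := h₃
  have hn₁ : 0 < n₁ := Nat.cast_pos.mp (hC.trans (hCx.trans hx₁))
  have hdy : (d : ℝ) ≤ y := by
    push_cast at hy₃
    linarith [d.cast_nonneg (α := ℝ)]
  have hlt_d := hdiff n₁ d hn₁ (by omega) hs₁ hs₂ hs₃ (hCx.trans hx₂)
  have hx_le : x ^ θ ≤ ((n₁ + d : ℕ) : ℝ) ^ θ :=
    Real.rpow_le_rpow (hC.trans hCx).le hx₂.le hθ₀
  exact hlt_d.not_ge (hdy.trans (hy.trans hx_le))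

/-- Assuming the abc-conjecture, there is a constant `C > 0` such that for all real
`x > C` and `1 ≤ y ≤ x^0.2`, the squarefull integers in the interval `(x, x + y]`
contain no non-trivial three-term arithmetic progression. -/
theorem no_three_term_AP_squarefull_of_abc (habc : ABCConjecture) :
    ∃ C : ℝ, 0 < C ∧ ∀ x y : ℝ, C < x → 1 ≤ y → y ≤ x ^ ((0.2 : ℝ)) →
      ¬ ∃ n₁ n₂ n₃ : ℕ, n₁ < n₂ ∧ n₂ < n₃ ∧
        IsSquarefull n₁ ∧ IsSquarefull n₂ ∧ IsSquarefull n₃ ∧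
        x < (n₁ : ℝ) ∧ (n₁ : ℝ) ≤ x + y ∧
        x < (n₂ : ℝ) ∧ (n₂ : ℝ) ≤ x + y ∧
        x < (n₃ : ℝ) ∧ (n₃ : ℝ) ≤ x + y ∧
        n₁ + n₃ = 2 * n₂ := by
  obtain ⟨C, hC, hfree⟩ :=
    no_three_term_AP_squarefull_of_abc_general habc (θ := 0.2) (by norm_num) (by norm_num)
  refine ⟨C, hC, fun x y hx _ hy => ?_⟩
  rintro ⟨n₁, n₂, n₃, h₁₂, -, hs₁, hs₂, hs₃, hx₁, hy₁, hx₂, hy₂, hx₃, hy₃, hAP⟩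
  exact h₁₂.ne <| hfree x y hx hy ⟨hs₁, hx₁, hy₁⟩ ⟨hs₂, hx₂, hy₂⟩ ⟨hs₃, hx₃, hy₃⟩ <|
    hAP.trans (two_mul n₂)
end

section
/- There exists a constant C > 0 such that for all real x ≥ 1, all real y with 1 ≤ y ≤ x, every real z ≥ 2, and all integers q ≥ 1 and r with gcd(r, q) = 1, the number of integers n with x < n ≤ x + y, n ≡ r (mod q), and whose smallest prime factor exceeds z is at most C·( y/(φ(q)·log z) + z² ). -/
/-!
Selberg's `Λ²` sieve, applied to the integers `n ≡ r (mod q)` in `(x, x + y]` with the primes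
`p ≤ z` not dividing `q` removed, at level `z²`. Its weights are bounded by `1` and supported on
`d ≤ z`, and the remainder at each modulus is at most `1`, so the error is at most `z²`. The main
term is `(y / q) / J` with `J = ∑ 1 / φ(e)` over squarefree `e ≤ z` coprime to `q`. Grouping the
terms of `∑_{n ≤ z} 1 / n` by the product `e` of the primes dividing `n` but not `q`, each group
sums to at most `(q / φ(q)) / φ(e)`, whence `J ≥ (φ(q) / q) log z`.
-/

open Finset ArithmeticFunction
open scoped ArithmeticFunction.Moebius ArithmeticFunction.zeta Nat
open BoundingSieve

section SelbergWeights

lemma sum_divisors_filter_dvd_moebius {e n : ℕ} (hn : Squarefree n) :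
    ∑ d ∈ n.divisors with e ∣ d, μ d = if n = e then μ e else 0 := by
  by_cases hen : e ∣ n
  swap
  · rw [filter_false_of_mem fun d hd hed ↦ hen (hed.trans (Nat.dvd_of_mem_divisors hd)), sum_empty,
      if_neg fun h ↦ hen h.symm.dvd]
  obtain ⟨m, rfl⟩ := hen
  have he : e ≠ 0 := left_ne_zero_of_mul hn.ne_zero
  have hm : m ≠ 0 := right_ne_zero_of_mul hn.ne_zero
  have hem : e.Coprime m := Nat.coprime_of_squarefree_mul hn
  have multiples : {d ∈ (e * m).divisors | e ∣ d} = m.divisors.image (e * ·) := by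
    ext d
    simp only [mem_filter, Nat.mem_divisors, mem_image]
    constructor
    · rintro ⟨⟨hd, -⟩, k, rfl⟩
      exact ⟨k, ⟨Nat.dvd_of_mul_dvd_mul_left (Nat.pos_of_ne_zero he) hd, hm⟩, rfl⟩
    · rintro ⟨k, ⟨hk, -⟩, rfl⟩
      exact ⟨⟨mul_dvd_mul_left e hk, hn.ne_zero⟩, dvd_mul_right e k⟩
  calc ∑ d ∈ (e * m).divisors with e ∣ d, μ d
      = ∑ k ∈ m.divisors, μ (e * k) := by
        rw [multiples, sum_image (mul_right_injective₀ he).injOn]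
    _ = μ e * ∑ k ∈ m.divisors, μ k := by
        rw [mul_sum]
        refine sum_congr rfl fun k hk ↦ ?_
        exact isMultiplicative_moebius.map_mul_of_coprime
          (hem.coprime_dvd_right (Nat.dvd_of_mem_divisors hk))
    _ = if e * m = e then μ e else 0 := by
        rw [← coe_zeta_mul_apply, coe_zeta_mul_moebius, one_apply, mul_ite, mul_one, mul_zero]
        simp only [mul_eq_left₀ he]

/-- The divisors `d` of the sifting modulus with `d ≤ √level`, on which Selberg's weights are
supported; the condition is encoded as `d ^ 2 ≤ level`. -/
noncomputable def selbergSupport (s : SelbergSieve) : Finset ℕ :=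
  {d ∈ s.prodPrimes.divisors | (d : ℝ) ^ 2 ≤ s.level}

/-- The sum `J = ∑ g(l)` of `BoundingSieve.selbergTerms` over `selbergSupport`, whose reciprocal is
the sieving density achieved by Selberg's weights. -/
noncomputable def selbergBoundingSum (s : SelbergSieve) : ℝ :=
  ∑ l ∈ selbergSupport s, s.selbergTerms l

/-- The weights `λ_d = μ(d) / (ν(d) J) * ∑_{d ∣ l} g(l)` minimising the main term of the Λ² sieve
among weights with `λ_1 = 1` supported on `selbergSupport`. -/
noncomputable def selbergWeights (s : SelbergSieve) (d : ℕ) : ℝ :=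
  μ d * (s.nu d * selbergBoundingSum s)⁻¹ * ∑ l ∈ selbergSupport s with d ∣ l, s.selbergTerms l

variable {s : SelbergSieve} {d e : ℕ}

lemma mem_selbergSupport : d ∈ selbergSupport s ↔ d ∣ s.prodPrimes ∧ (d : ℝ) ^ 2 ≤ s.level := by
  simp [selbergSupport, prodPrimes_ne_zero]

lemma one_mem_selbergSupport : 1 ∈ selbergSupport s := by
  simp [mem_selbergSupport, s.one_le_level]

lemma squarefree_of_mem_selbergSupport (hd : d ∈ selbergSupport s) : Squarefree d :=
  squarefree_of_dvd_prodPrimes (mem_selbergSupport.1 hd).1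

lemma selbergTerms_pos_of_mem_selbergSupport (hd : d ∈ selbergSupport s) : 0 < s.selbergTerms d :=
  selbergTerms_pos (mem_selbergSupport.1 hd).1

lemma mem_selbergSupport_of_dvd (hd : d ∈ selbergSupport s) (hed : e ∣ d) :
    e ∈ selbergSupport s := by
  have hed' : e ≤ d :=
    Nat.le_of_dvd (Nat.pos_of_ne_zero (squarefree_of_mem_selbergSupport hd).ne_zero) hed
  rw [mem_selbergSupport] at hd ⊢
  exact ⟨hed.trans hd.1, le_trans (by gcongr) hd.2⟩

lemma sq_card_selbergSupport_le : (#(selbergSupport s) : ℝ) ^ 2 ≤ s.level := by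
  have hsub : selbergSupport s ⊆ Icc 1 ⌊√s.level⌋₊ := fun d hd ↦ by
    rw [mem_Icc]
    exact ⟨Nat.pos_of_ne_zero (squarefree_of_mem_selbergSupport hd).ne_zero,
      Nat.le_floor (Real.le_sqrt_of_sq_le (mem_selbergSupport.1 hd).2)⟩
  have hcard : (#(selbergSupport s) : ℝ) ≤ √s.level := by
    refine (Nat.cast_le.2 (card_le_card hsub)).trans ?_
    rw [Nat.card_Icc, Nat.add_sub_cancel]
    exact Nat.floor_le (Real.sqrt_nonneg _)
  exact (Real.le_sqrt (Nat.cast_nonneg _) (zero_le_one.trans s.one_le_level)).1 hcard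

lemma selbergBoundingSum_pos : 0 < selbergBoundingSum s :=
  sum_pos (fun _ ↦ selbergTerms_pos_of_mem_selbergSupport) ⟨1, one_mem_selbergSupport⟩

lemma selbergWeights_one : selbergWeights s 1 = 1 := by
  have hJ : selbergBoundingSum s ≠ 0 := selbergBoundingSum_pos.ne'
  simp only [selbergWeights, one_dvd, filter_true, moebius_apply_one, s.nu_mult.map_one,
    Int.cast_one, one_mul]
  exact inv_mul_cancel₀ hJ

lemma selbergWeights_eq_zero (hd : d ∉ selbergSupport s) : selbergWeights s d = 0 := by
  rw [selbergWeights, filter_false_of_mem fun l hl hdl ↦ hd (mem_selbergSupport_of_dvd hl hdl),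
    sum_empty, mul_zero]

lemma nu_mul_selbergWeights (hd : d ∣ s.prodPrimes) :
    s.nu d * selbergWeights s d =
      (selbergBoundingSum s)⁻¹ * ∑ l ∈ selbergSupport s with d ∣ l, μ d * s.selbergTerms l := by
  have hν : s.nu d ≠ 0 := nu_ne_zero hd
  rw [selbergWeights, ← mul_sum, mul_inv]
  field_simp

lemma sum_nu_mul_selbergWeights :
    ∑ d ∈ s.prodPrimes.divisors, (if e ∣ d then s.nu d * selbergWeights s d else 0) =
      if e ∈ selbergSupport s then (selbergBoundingSum s)⁻¹ * (μ e * s.selbergTerms e) else 0 := by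
  have inner (l : ℕ) (hl : l ∈ selbergSupport s) :
      ∑ d ∈ s.prodPrimes.divisors with e ∣ d ∧ d ∣ l, (μ d : ℝ) =
        if l = e then (μ e : ℝ) else 0 := by
    have hdiv : {d ∈ s.prodPrimes.divisors | e ∣ d ∧ d ∣ l} = {d ∈ l.divisors | e ∣ d} := by
      rw [← Nat.divisors_filter_dvd_of_dvd prodPrimes_ne_zero (mem_selbergSupport.1 hl).1,
        filter_filter]
      simp only [and_comm]
    rw [hdiv]
    exact_mod_cast sum_divisors_filter_dvd_moebius (squarefree_of_mem_selbergSupport hl)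
  calc ∑ d ∈ s.prodPrimes.divisors, (if e ∣ d then s.nu d * selbergWeights s d else 0)
      = (selbergBoundingSum s)⁻¹ * ∑ d ∈ s.prodPrimes.divisors with e ∣ d,
          ∑ l ∈ selbergSupport s with d ∣ l, μ d * s.selbergTerms l := by
        rw [← sum_filter, mul_sum]
        refine sum_congr rfl fun d hd ↦ nu_mul_selbergWeights ?_
        exact Nat.dvd_of_mem_divisors (mem_filter.1 hd).1
    _ = (selbergBoundingSum s)⁻¹ * ∑ l ∈ selbergSupport s,
          (∑ d ∈ s.prodPrimes.divisors with e ∣ d ∧ d ∣ l, (μ d : ℝ)) * s.selbergTerms l := by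
        simp_rw [sum_mul, ← filter_filter]
        congr 1
        exact sum_comm' fun d l ↦ by simp only [mem_filter]; tauto
    _ = _ := by
        rw [sum_congr rfl fun l hl ↦ by rw [inner l hl]]
        simp only [ite_mul, zero_mul, sum_ite_eq', mul_ite, mul_zero]

theorem mainSum_lambdaSquared_selbergWeights :
    s.mainSum (lambdaSquared (selbergWeights s)) = (selbergBoundingSum s)⁻¹ := by
  have hJ : selbergBoundingSum s ≠ 0 := selbergBoundingSum_pos.ne'
  have hsub : selbergSupport s ⊆ s.prodPrimes.divisors := filter_subset _ _
  calc s.mainSum (lambdaSquared (selbergWeights s))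
      = ∑ l ∈ selbergSupport s, (s.selbergTerms l)⁻¹ *
          ((selbergBoundingSum s)⁻¹ * (μ l * s.selbergTerms l)) ^ 2 := by
        rw [mainSum_lambdaSquared_eq_sum_mul_sum_sq, ← sum_subset hsub]
        · refine sum_congr rfl fun l hl ↦ ?_
          rw [sum_nu_mul_selbergWeights, if_pos hl]
        · intro l _ hl
          rw [sum_nu_mul_selbergWeights, if_neg hl, sq, mul_zero, mul_zero]
    _ = ∑ l ∈ selbergSupport s, (selbergBoundingSum s)⁻¹ ^ 2 * s.selbergTerms l := by
        refine sum_congr rfl fun l hl ↦ ?_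
        have hg : s.selbergTerms l ≠ 0 := (selbergTerms_pos_of_mem_selbergSupport hl).ne'
        have hμ : (μ l : ℝ) ^ 2 = 1 := by
          exact_mod_cast moebius_sq_eq_one_of_squarefree (squarefree_of_mem_selbergSupport hl)
        rw [mul_pow, mul_pow, hμ]
        field_simp
    _ = (selbergBoundingSum s)⁻¹ := by
        rw [← mul_sum, ← selbergBoundingSum]
        field_simp

-- The fibre of `n ↦ gcd(n, d)` over `k` contains `k * (l / d)` for every multiple `l` of `d`.
lemma selbergTerms_mul_sum_le {k : ℕ} (hk : k ∣ d) :
    s.selbergTerms k * ∑ l ∈ selbergSupport s with d ∣ l, s.selbergTerms (l / d) ≤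
      ∑ n ∈ selbergSupport s with n.gcd d = k, s.selbergTerms n := by
  have exchange (l : ℕ) (hl : l ∈ {l ∈ selbergSupport s | d ∣ l}) :
      k * (l / d) ∈ {n ∈ selbergSupport s | n.gcd d = k} ∧ (l / d).Coprime k ∧ k ≠ 0 := by
    obtain ⟨hl, m, rfl⟩ := mem_filter.1 hl
    have hsq := squarefree_of_mem_selbergSupport hl
    have hdm : d.Coprime m := Nat.coprime_of_squarefree_mul hsq
    have hd : d ≠ 0 := left_ne_zero_of_mul hsq.ne_zero
    rw [Nat.mul_div_cancel_left m (Nat.pos_of_ne_zero hd), mem_filter,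
      hdm.symm.gcd_mul_right_cancel k, Nat.gcd_eq_left hk]
    exact ⟨⟨mem_selbergSupport_of_dvd hl (Nat.mul_dvd_mul_right hk m), rfl⟩,
      (hdm.coprime_dvd_left hk).symm, ne_zero_of_dvd_ne_zero hd hk⟩
  have injective : Set.InjOn (fun l ↦ k * (l / d))
      ({l ∈ selbergSupport s | d ∣ l} : Finset ℕ) := by
    intro l hl l' hl' h
    have hdiv := mul_left_cancel₀ (exchange l hl).2.2 h
    rw [← Nat.div_mul_cancel (mem_filter.1 hl).2, hdiv, Nat.div_mul_cancel (mem_filter.1 hl').2]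
  calc s.selbergTerms k * ∑ l ∈ selbergSupport s with d ∣ l, s.selbergTerms (l / d)
      = ∑ n ∈ {l ∈ selbergSupport s | d ∣ l}.image (fun l ↦ k * (l / d)), s.selbergTerms n := by
        rw [sum_image injective, mul_sum]
        refine sum_congr rfl fun l hl ↦ ?_
        exact (selbergTerms_isMultiplicative.map_mul_of_coprime (exchange l hl).2.1.symm).symm
    _ ≤ ∑ n ∈ selbergSupport s with n.gcd d = k, s.selbergTerms n := by
        refine sum_le_sum_of_subset_of_nonneg
          (image_subset_iff.2 fun l hl ↦ (exchange l hl).1) fun n hn _ ↦ ?_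
        exact (selbergTerms_pos_of_mem_selbergSupport (mem_filter.1 hn).1).le

lemma nu_inv_mul_sum_le_selbergBoundingSum (hd : d ∣ s.prodPrimes) :
    (s.nu d)⁻¹ * ∑ l ∈ selbergSupport s with d ∣ l, s.selbergTerms l ≤ selbergBoundingSum s := by
  have hd0 : d ≠ 0 := ne_zero_of_dvd_ne_zero prodPrimes_ne_zero hd
  have factor (l : ℕ) (hl : l ∈ {l ∈ selbergSupport s | d ∣ l}) :
      s.selbergTerms l = s.selbergTerms d * s.selbergTerms (l / d) := by
    obtain ⟨hl, m, rfl⟩ := mem_filter.1 hl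
    rw [Nat.mul_div_cancel_left m (Nat.pos_of_ne_zero hd0)]
    exact selbergTerms_isMultiplicative.map_mul_of_coprime
      (Nat.coprime_of_squarefree_mul (squarefree_of_mem_selbergSupport hl))
  calc (s.nu d)⁻¹ * ∑ l ∈ selbergSupport s with d ∣ l, s.selbergTerms l
      = s.selbergTerms d * (s.nu d)⁻¹ *
          ∑ l ∈ selbergSupport s with d ∣ l, s.selbergTerms (l / d) := by
        rw [sum_congr rfl factor, ← mul_sum]
        ring
    _ = ∑ k ∈ d.divisors, s.selbergTerms k *
          ∑ l ∈ selbergSupport s with d ∣ l, s.selbergTerms (l / d) := by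
        rw [← sum_divisors_selbergTerms_eq_selbergTerms_mul_nu_inv hd, ← sum_filter,
          Nat.divisors_filter_dvd_of_dvd prodPrimes_ne_zero hd, sum_mul]
    _ ≤ ∑ k ∈ d.divisors, ∑ n ∈ selbergSupport s with n.gcd d = k, s.selbergTerms n :=
        sum_le_sum fun k hk ↦ selbergTerms_mul_sum_le (Nat.dvd_of_mem_divisors hk)
    _ = selbergBoundingSum s :=
        sum_fiberwise_of_maps_to
          (fun n _ ↦ Nat.mem_divisors.2 ⟨Nat.gcd_dvd_right n d, hd0⟩) _

lemma abs_selbergWeights_le_one (hd : d ∣ s.prodPrimes) : |selbergWeights s d| ≤ 1 := by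
  have hJ := selbergBoundingSum_pos (s := s)
  have hν : 0 < s.nu d := nu_pos_of_dvd_prodPrimes hd
  have hsum : 0 ≤ ∑ l ∈ selbergSupport s with d ∣ l, s.selbergTerms l :=
    sum_nonneg fun l hl ↦ (selbergTerms_pos_of_mem_selbergSupport (mem_filter.1 hl).1).le
  have hμ : |(μ d : ℝ)| ≤ 1 := by exact_mod_cast abs_moebius_le_one (n := d)
  calc |selbergWeights s d|
      = |(μ d : ℝ)| * ((s.nu d)⁻¹ * (∑ l ∈ selbergSupport s with d ∣ l, s.selbergTerms l) /
          selbergBoundingSum s) := by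
        rw [selbergWeights, abs_mul, abs_mul, abs_of_nonneg hsum,
          abs_of_pos (inv_pos.2 (mul_pos hν hJ)), mul_inv]
        ring
    _ ≤ 1 * 1 := by
        gcongr
        exact (div_le_one hJ).2 (nu_inv_mul_sum_le_selbergBoundingSum hd)
    _ = 1 := one_mul 1

lemma sum_abs_selbergWeights_le :
    ∑ d ∈ s.prodPrimes.divisors, |selbergWeights s d| ≤ #(selbergSupport s) := by
  have hsub : selbergSupport s ⊆ s.prodPrimes.divisors := filter_subset _ _
  rw [← sum_subset hsub fun d _ hd ↦ by rw [selbergWeights_eq_zero hd, abs_zero]]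
  refine (sum_le_card_nsmul _ _ 1 fun d hd ↦ ?_).trans_eq (nsmul_one _)
  exact abs_selbergWeights_le_one (mem_selbergSupport.1 hd).1

lemma abs_lambdaSquared_le {P : ℕ} (hP : P ≠ 0) (hd : d ∣ P) (w : ℕ → ℝ) :
    |lambdaSquared w d| ≤ ∑ d₁ ∈ P.divisors, ∑ d₂ ∈ P.divisors,
      if d = d₁.lcm d₂ then |w d₁| * |w d₂| else 0 := by
  have hsub : d.divisors ⊆ P.divisors := Nat.divisors_subset_of_dvd hP hd
  have term_nonneg (d₁ d₂ : ℕ) : 0 ≤ if d = d₁.lcm d₂ then |w d₁| * |w d₂| else 0 := by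
    split_ifs <;> positivity
  calc |lambdaSquared w d|
      ≤ ∑ d₁ ∈ d.divisors, ∑ d₂ ∈ d.divisors, if d = d₁.lcm d₂ then |w d₁| * |w d₂| else 0 := by
        refine (abs_sum_le_sum_abs _ _).trans (sum_le_sum fun d₁ _ ↦ ?_)
        refine (abs_sum_le_sum_abs _ _).trans_eq (sum_congr rfl fun d₂ _ ↦ ?_)
        rw [apply_ite abs, abs_mul, abs_zero]
    _ ≤ ∑ d₁ ∈ d.divisors, ∑ d₂ ∈ P.divisors, if d = d₁.lcm d₂ then |w d₁| * |w d₂| else 0 :=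
        sum_le_sum fun d₁ _ ↦ sum_le_sum_of_subset_of_nonneg hsub fun d₂ _ _ ↦ term_nonneg d₁ d₂
    _ ≤ ∑ d₁ ∈ P.divisors, ∑ d₂ ∈ P.divisors, if d = d₁.lcm d₂ then |w d₁| * |w d₂| else 0 :=
        sum_le_sum_of_subset_of_nonneg hsub fun d₁ _ _ ↦ sum_nonneg fun d₂ _ ↦ term_nonneg d₁ d₂

lemma errSum_lambdaSquared_le (s : BoundingSieve) (w : ℕ → ℝ) {R : ℝ}
    (hR : ∀ d, d ∣ s.prodPrimes → |s.rem d| ≤ R) :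
    s.errSum (lambdaSquared w) ≤ (∑ d ∈ s.prodPrimes.divisors, |w d|) ^ 2 * R := by
  calc s.errSum (lambdaSquared w)
      ≤ ∑ d ∈ s.prodPrimes.divisors, (∑ d₁ ∈ s.prodPrimes.divisors, ∑ d₂ ∈ s.prodPrimes.divisors,
          if d = d₁.lcm d₂ then |w d₁| * |w d₂| else 0) * R := by
        refine sum_le_sum fun d hd ↦ ?_
        gcongr
        · exact abs_lambdaSquared_le prodPrimes_ne_zero (Nat.dvd_of_mem_divisors hd) w
        · exact hR d (Nat.dvd_of_mem_divisors hd)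
    _ = (∑ d ∈ s.prodPrimes.divisors, |w d|) ^ 2 * R := by
        rw [← sum_mul, sum_comm, sq, sum_mul_sum]
        congr 1
        refine sum_congr rfl fun d₁ hd₁ ↦ ?_
        rw [sum_comm]
        refine sum_congr rfl fun d₂ hd₂ ↦ ?_
        rw [sum_ite_eq_of_mem']
        exact Nat.mem_divisors.2 ⟨Nat.lcm_dvd (Nat.dvd_of_mem_divisors hd₁)
          (Nat.dvd_of_mem_divisors hd₂), prodPrimes_ne_zero⟩

theorem siftedSum_le_div_selbergBoundingSum_add {R : ℝ}
    (hR : ∀ d, d ∣ s.prodPrimes → |s.rem d| ≤ R) :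
    s.siftedSum ≤ s.totalMass / selbergBoundingSum s + s.level * R := by
  have hR0 : 0 ≤ R := (abs_nonneg _).trans (hR 1 (one_dvd _))
  calc s.siftedSum
      ≤ s.totalMass * s.mainSum (lambdaSquared (selbergWeights s)) +
          s.errSum (lambdaSquared (selbergWeights s)) :=
        siftedSum_le_mainSum_errSum_of_upperMoebius _
          (upperMoebius_lambdaSquared _ selbergWeights_one)
    _ ≤ s.totalMass / selbergBoundingSum s +
          (∑ d ∈ s.prodPrimes.divisors, |selbergWeights s d|) ^ 2 * R := by
        rw [mainSum_lambdaSquared_selbergWeights, ← div_eq_mul_inv]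
        gcongr
        exact errSum_lambdaSquared_le _ _ hR
    _ ≤ s.totalMass / selbergBoundingSum s + s.level * R := by
        gcongr
        exact (pow_le_pow_left₀ (sum_nonneg fun _ _ ↦ abs_nonneg _)
          sum_abs_selbergWeights_le 2).trans sq_card_selbergSupport_le

end SelbergWeights

section HarmonicSum

lemma totient_eq_mul_prod_one_sub_inv (m : ℕ) :
    (φ m : ℝ) = m * ∏ p ∈ m.primeFactors, (1 - (p : ℝ)⁻¹) := by
  simpa using congrArg (fun t : ℚ ↦ (t : ℝ)) (Nat.totient_eq_mul_prod_factors m)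

lemma hasSum_inv_factoredNumbers_primeFactors {m : ℕ} (hm : m ≠ 0) :
    HasSum (fun k : Nat.factoredNumbers m.primeFactors ↦ ((k : ℕ) : ℝ)⁻¹) (m / φ m) := by
  have hm' : (m : ℝ) ≠ 0 := Nat.cast_ne_zero.2 hm
  have geometric {p : ℕ} (hp : p.Prime) : ‖(p : ℝ)⁻¹‖ < 1 := by
    rw [norm_inv, Real.norm_natCast]
    exact inv_lt_one_of_one_lt₀ (Nat.one_lt_cast.2 hp.one_lt)
  have euler_product :=
    (EulerProduct.summable_and_hasSum_factoredNumbers_prod_filter_prime_geometric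
      (f := ((invMonoidWithZeroHom : ℝ →*₀ ℝ) : ℝ →* ℝ).comp (Nat.castRingHom ℝ : ℕ →* ℝ))
      geometric m.primeFactors).2
  rw [filter_true_of_mem fun p ↦ Nat.prime_of_mem_primeFactors] at euler_product
  rw [totient_eq_mul_prod_one_sub_inv, div_mul_cancel_left₀ hm', ← prod_inv_distrib]
  exact euler_product

lemma sum_inv_multiples_le {e m : ℕ} (hm : m ≠ 0) (T : Finset ℕ) (he : ∀ n ∈ T, e ∣ n)
    (hT : ∀ n ∈ T, n ∈ Nat.factoredNumbers m.primeFactors) :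
    ∑ n ∈ T, (n : ℝ)⁻¹ ≤ (e : ℝ)⁻¹ * (m / φ m) := by
  have injective : Set.InjOn (· / e) (T : Set ℕ) := fun a ha b hb hab ↦ by
    rw [← Nat.div_mul_cancel (he a ha), ← Nat.div_mul_cancel (he b hb)]
    exact congrArg (· * e) hab
  have factored : ∀ k ∈ T.image (· / e), k ∈ Nat.factoredNumbers m.primeFactors := by
    refine forall_mem_image.2 fun n hn ↦ ?_
    exact Nat.mem_factoredNumbers_of_dvd (hT n hn) (Nat.div_dvd_of_dvd (he n hn))
  calc ∑ n ∈ T, (n : ℝ)⁻¹ = (e : ℝ)⁻¹ * ∑ k ∈ T.image (· / e), (k : ℝ)⁻¹ := by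
        rw [sum_image injective, mul_sum]
        refine sum_congr rfl fun n hn ↦ ?_
        rw [← mul_inv, ← Nat.cast_mul, Nat.mul_div_cancel' (he n hn)]
    _ ≤ (e : ℝ)⁻¹ * (m / φ m) := by
        gcongr
        rw [← sum_subtype_of_mem (fun k : ℕ ↦ (k : ℝ)⁻¹) factored]
        exact sum_le_hasSum _ (fun k _ ↦ by positivity)
          (hasSum_inv_factoredNumbers_primeFactors hm)

/-- The product of the primes dividing `n` but not `q`. It is both the squarefree kernel used to
group the terms of the harmonic sum and, for `n` a primorial, the modulus of the sieve. -/
def coprimeRadical (q n : ℕ) : ℕ :=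
  ∏ p ∈ n.primeFactors \ q.primeFactors, p

variable {d q n : ℕ}

lemma primeFactors_coprimeRadical :
    (coprimeRadical q n).primeFactors = n.primeFactors \ q.primeFactors :=
  Nat.primeFactors_prod fun _ hp ↦ Nat.prime_of_mem_primeFactors (mem_sdiff.1 hp).1

lemma coprimeRadical_dvd : coprimeRadical q n ∣ n :=
  (prod_dvd_prod_of_subset _ _ _ sdiff_subset).trans (Nat.prod_primeFactors_dvd n)

lemma coprimeRadical_ne_zero : coprimeRadical q n ≠ 0 :=
  prod_ne_zero_iff.2 fun _ hp ↦ (Nat.prime_of_mem_primeFactors (mem_sdiff.1 hp).1).ne_zero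

lemma coprime_coprimeRadical (hq : q ≠ 0) : (coprimeRadical q n).Coprime q := by
  rw [← Nat.disjoint_primeFactors coprimeRadical_ne_zero hq, primeFactors_coprimeRadical]
  exact sdiff_disjoint

lemma squarefree_coprimeRadical : Squarefree (coprimeRadical q n) := by
  refine squarefree_prod_of_pairwise_isCoprime (fun p hp p' hp' hne ↦ ?_) fun p hp ↦ ?_
  · exact Nat.coprime_iff_isRelPrime.1 <|
      (Nat.coprime_primes (Nat.prime_of_mem_primeFactors (mem_sdiff.1 hp).1)
        (Nat.prime_of_mem_primeFactors (mem_sdiff.1 hp').1)).2 hne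
  · exact (Nat.prime_of_mem_primeFactors (mem_sdiff.1 hp).1).prime.squarefree

lemma dvd_coprimeRadical (hd : Squarefree d) (hdq : d.Coprime q) (hdn : d ∣ n) (hn : n ≠ 0) :
    d ∣ coprimeRadical q n := by
  rw [← Nat.prod_primeFactors_of_squarefree hd]
  refine prod_dvd_prod_of_subset _ _ _ (subset_sdiff.2 ⟨?_, hdq.disjoint_primeFactors⟩)
  exact Nat.primeFactors_mono hdn hn

lemma sum_inv_le_of_coprimeRadical_eq {e : ℕ} (hq : q ≠ 0) (he : e ≠ 0) (heq : e.Coprime q)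
    (T : Finset ℕ) (hT : ∀ n ∈ T, n ≠ 0 ∧ coprimeRadical q n = e) :
    ∑ n ∈ T, (n : ℝ)⁻¹ ≤ q / φ q * (φ e : ℝ)⁻¹ := by
  have factored (n : ℕ) (hn : n ∈ T) : n ∈ Nat.factoredNumbers (q * e).primeFactors := by
    obtain ⟨hn0, rfl⟩ := hT n hn
    refine Nat.mem_factoredNumbers_of_primeFactors_subset hn0 ?_
    rw [Nat.primeFactors_mul hq he, primeFactors_coprimeRadical, union_sdiff_self_eq_union]
    exact subset_union_right
  have he' : (e : ℝ) ≠ 0 := Nat.cast_ne_zero.2 he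
  calc ∑ n ∈ T, (n : ℝ)⁻¹ ≤ (e : ℝ)⁻¹ * ((q * e : ℕ) / φ (q * e)) :=
        sum_inv_multiples_le (mul_ne_zero hq he) T
          (fun n hn ↦ (hT n hn).2 ▸ coprimeRadical_dvd) factored
    _ = q / φ q * (φ e : ℝ)⁻¹ := by
        rw [Nat.totient_mul heq.symm]
        push_cast
        field_simp

lemma log_le_sum_inv_totient (hq : q ≠ 0) {z : ℝ} (hz : 0 ≤ z) :
    Real.log z ≤ q / φ q * ∑ e ∈ Icc 1 ⌊z⌋₊ with Squarefree e ∧ e.Coprime q, (φ e : ℝ)⁻¹ := by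
  have hmaps : ∀ n ∈ Icc 1 ⌊z⌋₊,
      coprimeRadical q n ∈ {e ∈ Icc 1 ⌊z⌋₊ | Squarefree e ∧ e.Coprime q} := fun n hn ↦ by
    rw [mem_Icc] at hn
    rw [mem_filter, mem_Icc]
    exact ⟨⟨Nat.pos_of_ne_zero coprimeRadical_ne_zero,
      (Nat.le_of_dvd hn.1 coprimeRadical_dvd).trans hn.2⟩,
      squarefree_coprimeRadical, coprime_coprimeRadical hq⟩
  calc Real.log z ≤ ∑ n ∈ Icc 1 ⌊z⌋₊, (n : ℝ)⁻¹ := by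
        simpa [harmonic_eq_sum_Icc] using log_le_harmonic_floor z hz
    _ = ∑ e ∈ Icc 1 ⌊z⌋₊ with Squarefree e ∧ e.Coprime q,
          ∑ n ∈ Icc 1 ⌊z⌋₊ with coprimeRadical q n = e, (n : ℝ)⁻¹ :=
        (sum_fiberwise_of_maps_to hmaps _).symm
    _ ≤ q / φ q * ∑ e ∈ Icc 1 ⌊z⌋₊ with Squarefree e ∧ e.Coprime q, (φ e : ℝ)⁻¹ := by
        rw [mul_sum]
        refine sum_le_sum fun e he ↦ ?_
        obtain ⟨-, hsq, heq⟩ := mem_filter.1 he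
        refine sum_inv_le_of_coprimeRadical_eq hq hsq.ne_zero heq _ fun n hn ↦ ?_
        obtain ⟨hn, rfl⟩ := mem_filter.1 hn
        exact ⟨(Nat.pos_of_ne_zero (by rintro rfl; simp at hn)).ne', rfl⟩

end HarmonicSum

section ResidueClass

lemma abs_card_Ioc_filter_modEq_sub_le {x y : ℝ} (hx : 0 ≤ x) (hy : 0 ≤ y) {m : ℕ} (hm : m ≠ 0)
    (v : ℕ) : |(#{n ∈ Ioc ⌊x⌋₊ ⌊x + y⌋₊ | n ≡ v [MOD m]} : ℝ) - y / m| ≤ 1 := by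
  have floor_eq (t : ℝ) (ht : 0 ≤ t) : ⌊((⌊t⌋₊ : ℚ) - v) / (m : ℚ)⌋ = ⌊(t - v) / m⌋ := by
    rw [Int.floor_div_natCast, Int.floor_div_natCast, Int.floor_sub_natCast, Int.floor_sub_natCast,
      Int.floor_natCast, Int.natCast_floor_eq_floor ht]
  have count := Nat.Ioc_filter_modEq_card ⌊x⌋₊ ⌊x + y⌋₊ (Nat.pos_of_ne_zero hm) v
  rw [floor_eq x hx, floor_eq (x + y) (add_nonneg hx hy), max_eq_left] at count
  swap
  · exact sub_nonneg.2 (Int.floor_le_floor (by gcongr; linarith))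
  have count' := congrArg (Int.cast (R := ℝ)) count
  push_cast at count'
  have split : y / m = (x + y - v) / m - (x - v) / m := by ring
  rw [count', split, abs_le]
  constructor <;>
  linarith [Int.floor_le ((x + y - v) / m), Int.lt_floor_add_one ((x + y - v) / m),
    Int.floor_le ((x - v) / m), Int.lt_floor_add_one ((x - v) / m)]

lemma exists_modEq_mul_iff {q d : ℕ} (hq : q ≠ 0) (hqd : q.Coprime d) (r : ℤ) :
    ∃ v : ℕ, ∀ n : ℕ, n ≡ v [MOD q * d] ↔ (n : ℤ) ≡ r [ZMOD q] ∧ d ∣ n := by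
  have hrep : ((r % q).toNat : ℤ) ≡ r [ZMOD q] := by
    rw [Int.toNat_of_nonneg (Int.emod_nonneg r (Nat.cast_ne_zero.2 hq))]
    exact Int.mod_modEq r q
  obtain ⟨v, hvq, hvd⟩ := Nat.chineseRemainder hqd (r % q).toNat 0
  refine ⟨v, fun n ↦ ?_⟩
  rw [← Nat.modEq_and_modEq_iff_modEq_mul hqd, ← Nat.modEq_zero_iff_dvd]
  refine and_congr ?_ ⟨fun h ↦ h.trans hvd, fun h ↦ h.trans hvd.symm⟩
  rw [← Int.natCast_modEq_iff]
  have hvr : (v : ℤ) ≡ r [ZMOD q] := (Int.natCast_modEq_iff.2 hvq).trans hrep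
  exact ⟨fun h ↦ h.trans hvr, fun h ↦ h.trans hvr.symm⟩

end ResidueClass

section ArithmeticProgression

/-- The density `n ↦ 1 / n` of the multiples of `n`, as an arithmetic function. -/
noncomputable def invArithmeticFunction : ArithmeticFunction ℝ where
  toFun n := (n : ℝ)⁻¹
  map_zero' := by simp only [Nat.cast_zero, inv_zero]

lemma invArithmeticFunction_apply (n : ℕ) : invArithmeticFunction n = (n : ℝ)⁻¹ := rfl

lemma isMultiplicative_invArithmeticFunction : invArithmeticFunction.IsMultiplicative := by
  refine ⟨?_, fun {m n} _ ↦ ?_⟩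
  · rw [invArithmeticFunction_apply, Nat.cast_one, inv_one]
  · simp only [invArithmeticFunction_apply, Nat.cast_mul, mul_inv]

/-- The Selberg sieve removing, from the integers `n ≡ r [ZMOD q]` in `(x, x + y]`, the multiples of
the primes `p ≤ z` not dividing `q`. The level `z ^ 2` makes `d ≤ z` the support condition for the
Selberg weights. -/
noncomputable def arithmeticProgressionSieve (x y : ℝ) {z : ℝ} (hz : 1 ≤ z) (q : ℕ) (r : ℤ) :
    SelbergSieve where
  support := {n ∈ Ioc ⌊x⌋₊ ⌊x + y⌋₊ | (n : ℤ) ≡ r [ZMOD q]}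
  prodPrimes := coprimeRadical q (primorial ⌊z⌋₊)
  prodPrimes_squarefree := squarefree_coprimeRadical
  weights _ := 1
  weights_nonneg _ := zero_le_one
  totalMass := y / q
  nu := invArithmeticFunction
  nu_mult := isMultiplicative_invArithmeticFunction
  nu_pos_of_prime _ hp _ := inv_pos.2 (Nat.cast_pos.2 hp.pos)
  nu_lt_one_of_prime _ hp _ := inv_lt_one_of_one_lt₀ (Nat.one_lt_cast.2 hp.one_lt)
  level := z ^ 2
  one_le_level := one_le_pow₀ hz

variable {x y z : ℝ} {q : ℕ} {r : ℤ} {hz : 1 ≤ z}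

lemma selbergTerms_arithmeticProgressionSieve (d : ℕ) :
    (arithmeticProgressionSieve x y hz q r).selbergTerms d = (φ d : ℝ)⁻¹ := by
  have nu_apply (n : ℕ) : (arithmeticProgressionSieve x y hz q r).nu n = (n : ℝ)⁻¹ := rfl
  simp only [selbergTerms_apply, nu_apply, totient_eq_mul_prod_one_sub_inv, mul_inv,
    prod_inv_distrib]

lemma selbergSupport_arithmeticProgressionSieve (hq : q ≠ 0) :
    selbergSupport (arithmeticProgressionSieve x y hz q r) =
      {e ∈ Icc 1 ⌊z⌋₊ | Squarefree e ∧ e.Coprime q} := by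
  ext d
  have hz0 : 0 ≤ z := zero_le_one.trans hz
  have level_iff : (d : ℝ) ^ 2 ≤ z ^ 2 ↔ d ≤ ⌊z⌋₊ := by
    rw [Nat.le_floor_iff hz0, sq_le_sq₀ d.cast_nonneg hz0]
  rw [mem_selbergSupport, mem_filter, mem_Icc]
  change d ∣ coprimeRadical q (primorial ⌊z⌋₊) ∧ (d : ℝ) ^ 2 ≤ z ^ 2 ↔ _
  rw [level_iff]
  constructor
  · rintro ⟨hd, hdz⟩
    have hsq := squarefree_coprimeRadical.squarefree_of_dvd hd
    exact ⟨⟨Nat.pos_of_ne_zero hsq.ne_zero, hdz⟩, hsq,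
      (coprime_coprimeRadical hq).coprime_dvd_left hd⟩
  · rintro ⟨⟨-, hdz⟩, hsq, hdq⟩
    have hd : d ∣ primorial ⌊z⌋₊ := hsq.dvd_primorial.trans (primorial_dvd_primorial hdz)
    exact ⟨dvd_coprimeRadical hsq hdq hd (primorial_ne_zero _), hdz⟩

lemma log_le_selbergBoundingSum (hq : q ≠ 0) :
    Real.log z ≤ q / φ q * selbergBoundingSum (arithmeticProgressionSieve x y hz q r) := by
  refine (log_le_sum_inv_totient hq (zero_le_one.trans hz)).trans_eq ?_
  simp only [selbergBoundingSum, selbergSupport_arithmeticProgressionSieve hq,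
    selbergTerms_arithmeticProgressionSieve]

lemma abs_rem_arithmeticProgressionSieve_le (hx : 0 ≤ x) (hy : 0 ≤ y) (hq : q ≠ 0) {d : ℕ}
    (hd : d ∣ (arithmeticProgressionSieve x y hz q r).prodPrimes) :
    |(arithmeticProgressionSieve x y hz q r).rem d| ≤ 1 := by
  have hd0 : d ≠ 0 := ne_zero_of_dvd_ne_zero prodPrimes_ne_zero hd
  have hqd : q.Coprime d := ((coprime_coprimeRadical hq).coprime_dvd_left hd).symm
  obtain ⟨v, hv⟩ := exists_modEq_mul_iff hq hqd r
  have multSum_eq : (arithmeticProgressionSieve x y hz q r).multSum d =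
      #{n ∈ Ioc ⌊x⌋₊ ⌊x + y⌋₊ | n ≡ v [MOD q * d]} := by
    simp only [hv, ← filter_filter]
    exact sum_boole _ _
  have main_eq : invArithmeticFunction d * (y / q) = y / (q * d : ℕ) := by
    rw [invArithmeticFunction_apply, Nat.cast_mul]
    field_simp
  change |(arithmeticProgressionSieve x y hz q r).multSum d -
    invArithmeticFunction d * (y / q)| ≤ 1
  rw [multSum_eq, main_eq]
  exact abs_card_Ioc_filter_modEq_sub_le hx hy (mul_ne_zero hq hd0) v

lemma ncard_rough_le_siftedSum (hx : 0 ≤ x) :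
    ({n : ℕ | x < n ∧ n ≤ x + y ∧ (n : ℤ) ≡ r [ZMOD q] ∧
      ∀ p : ℕ, p.Prime → p ∣ n → z < p}.ncard : ℝ) ≤
      (arithmeticProgressionSieve x y hz q r).siftedSum := by
  have siftedSum_eq : (arithmeticProgressionSieve x y hz q r).siftedSum =
      #{n ∈ {n ∈ Ioc ⌊x⌋₊ ⌊x + y⌋₊ | (n : ℤ) ≡ r [ZMOD q]} |
        (coprimeRadical q (primorial ⌊z⌋₊)).Coprime n} := sum_boole _ _
  rw [siftedSum_eq, ← Set.ncard_coe_finset, Nat.cast_le]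
  refine Set.ncard_le_ncard ?_ (finite_toSet _)
  rintro n ⟨hxn, hnxy, hnr, hn⟩
  have hn' : n ∈ Ioc ⌊x⌋₊ ⌊x + y⌋₊ :=
    mem_Ioc.2 ⟨(Nat.floor_lt hx).2 hxn, Nat.le_floor hnxy⟩
  refine mem_coe.2 (mem_filter.2 ⟨mem_filter.2 ⟨hn', hnr⟩, ?_⟩)
  refine Nat.coprime_of_dvd fun p hp hpP hpn ↦ (hn p hp hpn).not_ge ?_
  have hpz : p ≤ ⌊z⌋₊ := hp.dvd_primorial_iff.1 (hpP.trans coprimeRadical_dvd)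
  exact (Nat.le_floor_iff (zero_le_one.trans hz)).1 hpz

end ArithmeticProgression

theorem brun_titchmarsh_rough_numbers_general {x y z : ℝ} {q : ℕ} (r : ℤ) (hx : 0 ≤ x)
    (hy : 0 ≤ y) (hz : 1 < z) (hq : q ≠ 0) :
    ({n : ℕ | x < n ∧ n ≤ x + y ∧ (n : ℤ) ≡ r [ZMOD q] ∧
      ∀ p : ℕ, p.Prime → p ∣ n → z < p}.ncard : ℝ) ≤ y / (φ q * Real.log z) + z ^ 2 := by
  set s := arithmeticProgressionSieve x y hz.le q r
  have hφ : (0 : ℝ) < φ q := Nat.cast_pos.2 (Nat.totient_pos.2 (Nat.pos_of_ne_zero hq))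
  have hlog : 0 < Real.log z := Real.log_pos hz
  have density : φ q * Real.log z ≤ q * selbergBoundingSum s := by
    rw [← le_div_iff₀' hφ, ← div_mul_eq_mul_div]
    exact log_le_selbergBoundingSum hq
  calc _ ≤ s.siftedSum := ncard_rough_le_siftedSum hx
    _ ≤ y / q / selbergBoundingSum s + z ^ 2 * 1 :=
        siftedSum_le_div_selbergBoundingSum_add fun _ ↦
          abs_rem_arithmeticProgressionSieve_le hx hy hq
    _ ≤ y / (φ q * Real.log z) + z ^ 2 := by
        rw [div_div, mul_one]
        gcongr

/-- Brun–Titchmarsh-type sieve bound: there is a constant `C > 0` such that for all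
real `x ≥ 1`, `1 ≤ y ≤ x`, real `z ≥ 2`, and integers `q ≥ 1`, `r` with
`gcd(r, q) = 1`, the number of integers `n` with `x < n ≤ x + y`,
`n ≡ r (mod q)`, and all prime factors exceeding `z` is at most
`C · (y / (φ(q) · log z) + z²)`. -/
theorem brun_titchmarsh_rough_numbers :
    ∃ C : ℝ, 0 < C ∧ ∀ (x y z : ℝ) (q : ℕ) (r : ℤ),
      1 ≤ x → 1 ≤ y → y ≤ x → 2 ≤ z → 1 ≤ q → Int.gcd r (q : ℤ) = 1 →
      (({n : ℕ | x < (n : ℝ) ∧ (n : ℝ) ≤ x + y ∧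
          (n : ℤ) ≡ r [ZMOD (q : ℤ)] ∧
          ∀ p : ℕ, p.Prime → p ∣ n → z < (p : ℝ)}.ncard : ℝ))
        ≤ C * (y / ((Nat.totient q : ℝ) * Real.log z) + z ^ 2) :=
  ⟨1, one_pos, fun _ _ _ _ r hx hy _ hz hq _ ↦ by
    simpa only [one_mul] using brun_titchmarsh_rough_numbers_general r (by linarith) (by linarith)
      (by linarith) (Nat.one_le_iff_ne_zero.1 hq)⟩
end
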